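/- arXiv:1903.08396 — 8 statements merged into one kernel-verified Lean document; each statement's English description precedes it below -/
import Mathlib

section
/- Let V be a finite-dimensional complex vector space of dimension r and let f : V → V be a linear endomorphism whose minimal polynomial has degree r. Then there exist a linear isomorphism θ : V* → V and a linear map κ : V → V* such that f = θ ∘ κ, θ is symmetric, and κ is symmetric. -/
/-!
Let `A = K[f]`. Some vector `v` has the same annihilating polynomials as `f`, so `a ↦ a v` embeds
`A` into `V`; applied to the transpose of `f`, the same fact gives a covector `l` for which
`a ↦ l ∘ a` embeds `A` into `V*`. As `dim A = deg (minpoly f) = dim V`, both embeddings are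
isomorphisms. Then `θ : l ∘ a ↦ a v` and `κ : a v ↦ l ∘ f ∘ a` compose to `f`, and both are
symmetric because `A` is commutative: `(l ∘ b) (θ (l ∘ a)) = l (b a v)` and
`κ (a v) (b v) = l (f a b v)`.
-/

open Module Polynomial

section CommRing

variable {R V : Type*} [CommRing R] [AddCommGroup V] [Module R V]

theorem aeval_dualMap (f : End R V) (p : R[X]) :
    aeval (A := End R (Dual R V)) f.dualMap p = (aeval f p).dualMap := by
  induction p using Polynomial.induction_on' with
  | add p q hp hq => ext; simp [hp, hq]
  | monomial n c =>
    have dualMap_pow : (f.dualMap : End R (Dual R V)) ^ n = (f ^ n).dualMap := by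
      induction n with
      | zero => rfl
      | succ n ih => rw [pow_succ, pow_succ', ih]; rfl
    ext
    simp [aeval_monomial, dualMap_pow]

/-- The orbit map `a ↦ a v` of a vector `v` under an algebra `A` of endomorphisms of `V`. -/
def orbitMap (A : Subalgebra R (End R V)) (v : V) : A →ₗ[R] V :=
  LinearMap.applyₗ v ∘ₗ A.val.toLinearMap

@[simp]
theorem orbitMap_apply (A : Subalgebra R (End R V)) (v : V) (a : A) :
    orbitMap A v a = (a : End R V) v :=
  rfl

/-- The orbit map `a ↦ l ∘ a` of a covector `l` under the right action on `V*` of an algebra `A` of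
endomorphisms of `V`. -/
def dualOrbitMap (A : Subalgebra R (End R V)) (l : Dual R V) : A →ₗ[R] Dual R V :=
  LinearMap.compRight R l ∘ₗ A.val.toLinearMap

@[simp]
theorem dualOrbitMap_apply (A : Subalgebra R (End R V)) (l : Dual R V) (a : A) (w : V) :
    dualOrbitMap A l a w = l ((a : End R V) w) :=
  rfl

theorem dualOrbitMap_mul_orbitMap_comm (A : Subalgebra R (End R V)) [IsMulCommutative A]
    (v : V) (l : Dual R V) (c a b : A) :
    dualOrbitMap A l (c * a) (orbitMap A v b) = dualOrbitMap A l (c * b) (orbitMap A v a) := by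
  have comm_apply : (a : End R V) ((b : End R V) v) = (b : End R V) ((a : End R V) v) :=
    LinearMap.congr_fun (setLike_mul_comm a.2 b.2) v
  simp [comm_apply]

theorem exists_symmetric_factorization_of_bijective_orbitMap (A : Subalgebra R (End R V))
    [IsMulCommutative A] {v : V} {l : Dual R V} (hv : Function.Bijective (orbitMap A v))
    (hl : Function.Bijective (dualOrbitMap A l)) (f : A) :
    ∃ (θ : Dual R V →ₗ[R] V) (κ : V →ₗ[R] Dual R V),
      Function.Bijective θ ∧
      (f : End R V) = θ ∘ₗ κ ∧
      (∀ φ ψ : Dual R V, ψ (θ φ) = φ (θ ψ)) ∧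
      (∀ u w : V, κ u w = κ w u) := by
  let θ : Dual R V ≃ₗ[R] V :=
    (LinearEquiv.ofBijective _ hl).symm ≪≫ₗ LinearEquiv.ofBijective _ hv
  have θ_dualOrbitMap (a : A) : θ (dualOrbitMap A l a) = orbitMap A v a :=
    congrArg (orbitMap A v) (LinearEquiv.ofBijective_symm_apply_apply _ a)
  have θ_symm_f_orbitMap (a : A) :
      θ.symm ((f : End R V) (orbitMap A v a)) = dualOrbitMap A l (f * a) :=
    θ.symm_apply_eq.2 (θ_dualOrbitMap (f * a)).symm
  refine ⟨θ, θ.symm ∘ₗ (f : End R V), θ.bijective, ?_, fun φ ψ ↦ ?_, fun u w ↦ ?_⟩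
  · ext; simp
  · obtain ⟨a, rfl⟩ := hl.surjective φ
    obtain ⟨b, rfl⟩ := hl.surjective ψ
    rw [LinearEquiv.coe_coe, θ_dualOrbitMap, θ_dualOrbitMap]
    simpa only [one_mul] using dualOrbitMap_mul_orbitMap_comm A v l 1 b a
  · obtain ⟨a, rfl⟩ := hv.surjective u
    obtain ⟨b, rfl⟩ := hv.surjective w
    rw [LinearMap.comp_apply, LinearMap.comp_apply, LinearEquiv.coe_coe, θ_symm_f_orbitMap,
      θ_symm_f_orbitMap]
    exact dualOrbitMap_mul_orbitMap_comm A v l f a b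

end CommRing

section Field

variable {K : Type*} [Field K]

theorem finrank_adjoin_singleton_eq_natDegree_minpoly {S : Type*} [Ring S] [Algebra K S] (x : S) :
    finrank K (Algebra.adjoin K {x}) = (minpoly K x).natDegree := by
  rw [Algebra.adjoin_singleton_eq_range_aeval, ← finrank_quotient_span_eq_natDegree, Ideal.span,
    ← minpoly.ker_aeval_eq_span_minpoly]
  exact (Ideal.quotientKerEquivRange (aeval (R := K) x)).toLinearEquiv.finrank_eq.symm

variable {V : Type*} [AddCommGroup V] [Module K V]

theorem dualMap_eq_zero_iff {W : Type*} [AddCommGroup W] [Module K W] {g : V →ₗ[K] W} :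
    g.dualMap = 0 ↔ g = 0 := by
  refine ⟨fun h ↦ LinearMap.ext fun v ↦ ?_, fun h ↦ by ext; simp [h]⟩
  exact (forall_dual_apply_eq_zero_iff K (g v)).1 fun φ ↦
    LinearMap.congr_fun (LinearMap.congr_fun h φ) v

variable [FiniteDimensional K V]

theorem exists_forall_aeval_apply_eq_zero_imp (f : End K V) :
    ∃ v : V, ∀ p : K[X], aeval f p v = 0 → aeval f p = 0 := by
  obtain ⟨x, hx⟩ := exists_ker_toSpanSingleton_eq_annihilator K[X] (AEval' f)
  obtain ⟨v, rfl⟩ := (AEval'.of f).surjective x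
  refine ⟨v, fun p hp ↦ ?_⟩
  have p_mem_annihilator : p ∈ annihilator K[X] (AEval' f) := by
    rw [← hx, LinearMap.mem_ker, LinearMap.toSpanSingleton_apply, ← AEval.of_aeval_smul,
      End.smul_def, hp, map_zero]
  rwa [AEval.annihilator_eq_ker_aeval] at p_mem_annihilator

theorem exists_injective_orbitMap_adjoin (f : End K V) :
    ∃ v : V, Function.Injective (orbitMap (Algebra.adjoin K {f}) v) := by
  obtain ⟨v, hv⟩ := exists_forall_aeval_apply_eq_zero_imp f
  refine ⟨v, (injective_iff_map_eq_zero _).2 ?_⟩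
  rintro ⟨a, ha⟩ hav
  obtain ⟨p, rfl⟩ := Algebra.adjoin_mem_exists_aeval K f ha
  exact Subtype.ext (hv p hav)

theorem exists_injective_dualOrbitMap_adjoin (f : End K V) :
    ∃ l : Dual K V, Function.Injective (dualOrbitMap (Algebra.adjoin K {f}) l) := by
  obtain ⟨l, hl⟩ := exists_forall_aeval_apply_eq_zero_imp (V := Dual K V) f.dualMap
  refine ⟨l, (injective_iff_map_eq_zero _).2 ?_⟩
  rintro ⟨a, ha⟩ hla
  obtain ⟨p, rfl⟩ := Algebra.adjoin_mem_exists_aeval K f ha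
  simp only [aeval_dualMap, dualMap_eq_zero_iff] at hl
  exact Subtype.ext (hl p hla)

theorem factorization_exists_general (f : End K V)
    (hf : (minpoly K f).natDegree = finrank K V) :
    ∃ (θ : Dual K V →ₗ[K] V) (κ : V →ₗ[K] Dual K V),
      Function.Bijective θ ∧
      f = θ ∘ₗ κ ∧
      (∀ φ ψ : Dual K V, ψ (θ φ) = φ (θ ψ)) ∧
      (∀ v w : V, κ v w = κ w v) := by
  obtain ⟨v, hv⟩ := exists_injective_orbitMap_adjoin f
  obtain ⟨l, hl⟩ := exists_injective_dualOrbitMap_adjoin f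
  have finrank_eq : finrank K (Algebra.adjoin K {f}) = finrank K V :=
    (finrank_adjoin_singleton_eq_natDegree_minpoly f).trans hf
  have finrank_eq_dual : finrank K (Algebra.adjoin K {f}) = finrank K (Dual K V) :=
    finrank_eq.trans Subspace.dual_finrank_eq.symm
  exact exists_symmetric_factorization_of_bijective_orbitMap (Algebra.adjoin K {f})
    ⟨hv, (LinearMap.injective_iff_surjective_of_finrank_eq_finrank finrank_eq).1 hv⟩
    ⟨hl, (LinearMap.injective_iff_surjective_of_finrank_eq_finrank finrank_eq_dual).1 hl⟩
    ⟨f, Algebra.self_mem_adjoin_singleton K f⟩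

end Field

/-- Let `V` be a finite-dimensional complex vector space of dimension `r`
and let `f : V → V` be a linear endomorphism whose minimal polynomial has degree `r`.
Then there exist a linear isomorphism `θ : V* → V` and a linear map `κ : V → V*`
such that `f = θ ∘ κ`, `θ` is symmetric and `κ` is symmetric. -/
theorem factorization_exists
    (V : Type*) [AddCommGroup V] [Module ℂ V] [FiniteDimensional ℂ V]
    (f : Module.End ℂ V)
    (hf : (minpoly ℂ f).natDegree = Module.finrank ℂ V) :
    ∃ (θ : Module.Dual ℂ V →ₗ[ℂ] V) (κ : V →ₗ[ℂ] Module.Dual ℂ V),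
      Function.Bijective θ ∧
      f = θ ∘ₗ κ ∧
      (∀ φ ψ : Module.Dual ℂ V, ψ (θ φ) = φ (θ ψ)) ∧
      (∀ v w : V, κ v w = κ w v) := by
  exact factorization_exists_general f hf
end

section
/- Let V be a finite-dimensional complex vector space of dimension r and let f : V → V be a linear endomorphism whose minimal polynomial has degree r. Suppose θ₁, θ₂ : V* → V are symmetric linear isomorphisms and κ₁, κ₂ : V → V* are symmetric linear maps with f = θ₁ ∘ κ₁ = θ₂ ∘ κ₂. Then there exists a polynomial P ∈ ℂ[T] such that P(f) is invertible, θ₂ = θ₁ ∘ ᵗ(P(f)), and κ₁ = ᵗ(P(f)) ∘ κ₂. -/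
/-!
Symmetry of `θᵢ` and `κᵢ` makes both `θᵢ` intertwine `ᵗf` with `f`, so `θ₂ ∘ θ₁⁻¹` commutes with
`f`. Some vector `x` has annihilator `(minpoly f)` in `K[X]`, so that `K[X] x` has dimension
`deg (minpoly f) = dim V`: `x` is a cyclic vector, and everything commuting with `f` is a
polynomial `P(f)`. Hence `θ₂ = P(f) ∘ θ₁`, which is `θ₁ ∘ ᵗ(P(f))` since `θ₁` intertwines every
polynomial in `ᵗf` with the same polynomial in `f`; cancelling `θ₁` in `θ₁ ∘ κ₁ = θ₂ ∘ κ₂` gives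
the formula for `κ₁`.
-/

open Polynomial

section CommSemiring

variable {R V W : Type*} [CommSemiring R] [AddCommMonoid V] [Module R V]
  [AddCommMonoid W] [Module R W]

theorem comp_aeval_of_comp_eq {f : Module.End R V} {g : Module.End R W} {h : V →ₗ[R] W}
    (hfg : h ∘ₗ f = g ∘ₗ h) (P : R[X]) : h ∘ₗ aeval f P = aeval g P ∘ₗ h := by
  induction P using Polynomial.induction_on with
  | C a => ext v; simp
  | add P Q hP hQ => rw [map_add, map_add, LinearMap.comp_add, LinearMap.add_comp, hP, hQ]
  | monomial n a ih =>
    rw [pow_succ, ← mul_assoc, map_mul _ _ X, map_mul _ _ X, aeval_X, aeval_X,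
      Module.End.mul_eq_comp, Module.End.mul_eq_comp, ← LinearMap.comp_assoc, ih,
      LinearMap.comp_assoc, hfg, LinearMap.comp_assoc]

theorem dualMap_aeval (f : Module.End R V) (P : R[X]) :
    (aeval f P).dualMap = aeval (R := R) (A := Module.End R (Module.Dual R V)) f.dualMap P := by
  induction P using Polynomial.induction_on with
  | C a => ext φ v; simp
  | add P Q hP hQ =>
    rw [map_add, map_add, ← hP, ← hQ]
    exact map_add Module.Dual.transpose _ _
  | monomial n a ih =>
    rw [pow_succ, ← mul_assoc, map_mul _ _ X, mul_comm _ X, map_mul _ X, aeval_X, aeval_X, ← ih]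
    rfl

theorem comp_dualMap_eq_comp_of_symmetric {f : Module.End R V} {θ : Module.Dual R V →ₗ[R] V}
    {κ : V →ₗ[R] Module.Dual R V} (hθ : ∀ φ ψ : Module.Dual R V, ψ (θ φ) = φ (θ ψ))
    (hκ : ∀ v w : V, κ v w = κ w v) (hf : f = θ ∘ₗ κ) : θ ∘ₗ f.dualMap = f ∘ₗ θ := by
  have dualMap_eq : f.dualMap = κ ∘ₗ θ := by
    ext φ w
    calc φ (f w) = φ (θ (κ w)) := by rw [hf, LinearMap.comp_apply]
      _ = κ w (θ φ) := hθ (κ w) φ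
      _ = κ (θ φ) w := hκ w (θ φ)
  rw [dualMap_eq, hf, LinearMap.comp_assoc]

/-- `x` is a cyclic vector of the endomorphism `f`: the vectors `P(f) x`, for polynomials `P`,
exhaust the module. -/
def IsCyclicVector (f : Module.End R V) (x : V) : Prop :=
  ∀ y : V, ∃ P : R[X], aeval f P x = y

theorem IsCyclicVector.exists_aeval_eq_of_commute {f g : Module.End R V} {x : V}
    (hx : IsCyclicVector f x) (hfg : Commute f g) : ∃ P : R[X], aeval f P = g := by
  obtain ⟨P, hP⟩ := hx (g x)
  refine ⟨P, LinearMap.ext fun y ↦ ?_⟩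
  obtain ⟨Q, rfl⟩ := hx y
  calc aeval f P (aeval f Q x) = aeval f Q (aeval f P x) := by
        rw [← Module.End.mul_apply, ← map_mul, mul_comm, map_mul, Module.End.mul_apply]
    _ = aeval f Q (g x) := by rw [hP]
    _ = g (aeval f Q x) := (LinearMap.congr_fun (comp_aeval_of_comp_eq hfg.eq.symm Q) x).symm

theorem IsCyclicVector.exists_eq_aeval_comp {f : Module.End R V} {x : V}
    (hx : IsCyclicVector f x) {h : Module.End R W} {θ₁ θ₂ : W →ₗ[R] V}
    (hθ₁ : Function.Bijective θ₁) (h₁ : θ₁ ∘ₗ h = f ∘ₗ θ₁) (h₂ : θ₂ ∘ₗ h = f ∘ₗ θ₂) :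
    ∃ P : R[X], θ₂ = aeval f P ∘ₗ θ₁ := by
  let g : Module.End R V := θ₂ ∘ₗ (LinearEquiv.ofBijective θ₁ hθ₁).symm
  have g_apply (w : W) : g (θ₁ w) = θ₂ w :=
    congrArg θ₂ ((LinearEquiv.ofBijective θ₁ hθ₁).symm_apply_apply w)
  have commute_g : Commute f g := by
    ext v
    obtain ⟨w, rfl⟩ := hθ₁.surjective v
    calc f (g (θ₁ w)) = f (θ₂ w) := by rw [g_apply]
      _ = θ₂ (h w) := (LinearMap.congr_fun h₂ w).symm
      _ = g (θ₁ (h w)) := (g_apply _).symm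
      _ = g (f (θ₁ w)) := congrArg g (LinearMap.congr_fun h₁ w)
  obtain ⟨P, hP⟩ := hx.exists_aeval_eq_of_commute commute_g
  exact ⟨P, LinearMap.ext fun w ↦ by rw [hP, LinearMap.comp_apply, g_apply]⟩

end CommSemiring

section Field

variable {K V : Type*} [Field K] [AddCommGroup V] [Module K V] [FiniteDimensional K V]

theorem exists_aeval_apply_eq_zero_iff_minpoly_dvd (f : Module.End K V) :
    ∃ x : V, ∀ P : K[X], aeval f P x = 0 ↔ minpoly K f ∣ P := by
  obtain ⟨x, hx⟩ := Module.exists_ker_toSpanSingleton_eq_annihilator K[X] (Module.AEval' f)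
  refine ⟨(Module.AEval'.of f).symm x, fun P ↦ ?_⟩
  rw [← Ideal.mem_span_singleton, span_minpoly_eq_annihilator, ← hx, LinearMap.mem_ker,
    LinearMap.toSpanSingleton_apply]
  rfl

theorem exists_isCyclicVector_of_natDegree_minpoly_eq_finrank {f : Module.End K V}
    (hf : (minpoly K f).natDegree = Module.finrank K V) : ∃ x : V, IsCyclicVector f x := by
  obtain ⟨x, hx⟩ := exists_aeval_apply_eq_zero_iff_minpoly_dvd f
  let evalAt : K[X] →ₗ[K] V := LinearMap.applyₗ x ∘ₗ (aeval f).toLinearMap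
  have ker_evalAt : evalAt.ker = (Ideal.span {minpoly K f}).restrictScalars K := by
    ext P
    exact (hx P).trans Ideal.mem_span_singleton.symm
  have finrank_range : Module.finrank K evalAt.range = Module.finrank K V := by
    rw [← evalAt.quotKerEquivRange.finrank_eq, ker_evalAt, ← hf]
    exact finrank_quotient_span_eq_natDegree
  exact ⟨x, LinearMap.range_eq_top.mp (Submodule.eq_top_of_finrank_eq finrank_range)⟩

end Field

theorem factorization_unique_general {R V : Type*} [CommSemiring R] [AddCommMonoid V] [Module R V]
    {f : Module.End R V} {x : V} (hx : IsCyclicVector f x)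
    {θ₁ θ₂ : Module.Dual R V →ₗ[R] V} {κ₁ κ₂ : V →ₗ[R] Module.Dual R V}
    (hθ₁bij : Function.Bijective θ₁) (hθ₂bij : Function.Bijective θ₂)
    (hθ₁sym : ∀ φ ψ : Module.Dual R V, ψ (θ₁ φ) = φ (θ₁ ψ))
    (hθ₂sym : ∀ φ ψ : Module.Dual R V, ψ (θ₂ φ) = φ (θ₂ ψ))
    (hκ₁sym : ∀ v w : V, κ₁ v w = κ₁ w v)
    (hκ₂sym : ∀ v w : V, κ₂ v w = κ₂ w v)
    (h₁ : f = θ₁ ∘ₗ κ₁) (h₂ : f = θ₂ ∘ₗ κ₂) :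
    ∃ P : R[X], Function.Bijective (aeval f P) ∧
      θ₂ = θ₁ ∘ₗ (aeval f P).dualMap ∧ κ₁ = (aeval f P).dualMap ∘ₗ κ₂ := by
  have intertwine₁ := comp_dualMap_eq_comp_of_symmetric hθ₁sym hκ₁sym h₁
  have intertwine₂ := comp_dualMap_eq_comp_of_symmetric hθ₂sym hκ₂sym h₂
  obtain ⟨P, hP⟩ := hx.exists_eq_aeval_comp hθ₁bij intertwine₁ intertwine₂
  have θ₂_eq : θ₂ = θ₁ ∘ₗ (aeval f P).dualMap := by
    rw [dualMap_aeval, comp_aeval_of_comp_eq intertwine₁, ← hP]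
  refine ⟨P, ?_, θ₂_eq, ?_⟩
  · rwa [hP, LinearMap.coe_comp, Function.Bijective.of_comp_iff _ hθ₁bij] at hθ₂bij
  · rw [← LinearMap.cancel_left hθ₁bij.injective, ← LinearMap.comp_assoc, ← θ₂_eq, ← h₁, h₂]

/-- Let `V` be a finite-dimensional complex vector space of dimension `r`
and `f : V → V` a linear endomorphism whose minimal polynomial has degree `r`.
Suppose `θ₁, θ₂ : V* → V` are symmetric linear isomorphisms and `κ₁, κ₂ : V → V*` are
symmetric linear maps with `f = θ₁ ∘ κ₁ = θ₂ ∘ κ₂`.  Then there exists a polynomial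
`P ∈ ℂ[T]` such that `P(f)` is invertible, `θ₂ = θ₁ ∘ ᵗ(P(f))` and `κ₁ = ᵗ(P(f)) ∘ κ₂`. -/
theorem factorization_unique
    (V : Type*) [AddCommGroup V] [Module ℂ V] [FiniteDimensional ℂ V]
    (f : Module.End ℂ V)
    (hf : (minpoly ℂ f).natDegree = Module.finrank ℂ V)
    (θ₁ θ₂ : Module.Dual ℂ V →ₗ[ℂ] V) (κ₁ κ₂ : V →ₗ[ℂ] Module.Dual ℂ V)
    (hθ₁bij : Function.Bijective θ₁) (hθ₂bij : Function.Bijective θ₂)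
    (hθ₁sym : ∀ φ ψ : Module.Dual ℂ V, ψ (θ₁ φ) = φ (θ₁ ψ))
    (hθ₂sym : ∀ φ ψ : Module.Dual ℂ V, ψ (θ₂ φ) = φ (θ₂ ψ))
    (hκ₁sym : ∀ v w : V, κ₁ v w = κ₁ w v)
    (hκ₂sym : ∀ v w : V, κ₂ v w = κ₂ w v)
    (h₁ : f = θ₁ ∘ₗ κ₁) (h₂ : f = θ₂ ∘ₗ κ₂) :
    ∃ P : Polynomial ℂ,
      Function.Bijective ⇑(Polynomial.aeval f P) ∧
      θ₂ = θ₁ ∘ₗ LinearMap.dualMap (Polynomial.aeval f P) ∧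
      κ₁ = LinearMap.dualMap (Polynomial.aeval f P) ∘ₗ κ₂ := by
  obtain ⟨x, hx⟩ := exists_isCyclicVector_of_natDegree_minpoly_eq_finrank hf
  exact factorization_unique_general hx hθ₁bij hθ₂bij hθ₁sym hθ₂sym hκ₁sym hκ₂sym h₁ h₂
end

section
/- Let V be a finite-dimensional complex vector space of dimension r and let f : V → V be a linear endomorphism whose minimal polynomial has degree r. Then a linear endomorphism g : V → V satisfies f ∘ g = g ∘ f if and only if there exists a polynomial P ∈ ℂ[T] with g = P(f); that is, the kernel of the adjoint map ad(f) : g ↦ f∘g − g∘f equals the subalgebra of polynomials in f. -/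
/-!
View `V` as a `K[X]`-module with `X` acting as `f`. Over the principal ideal domain `K[X]` some
vector has the same annihilator as the whole module, namely the ideal generated by the minimal
polynomial, so the submodule it generates has dimension the degree of that polynomial. When this
degree is `dim V`, the module is cyclic. An endomorphism commuting with `f` is `K[X]`-linear, and a
linear endomorphism of a cyclic module over a commutative ring is multiplication by a scalar.
-/

open Module Polynomial

theorem exists_forall_apply_eq_smul_of_isPrincipal {R M : Type*} [CommSemiring R]
    [AddCommMonoid M] [Module R M] [Module.IsPrincipal R M] (φ : M →ₗ[R] M) :
    ∃ r : R, ∀ x, φ x = r • x := by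
  obtain ⟨v, hv⟩ := Submodule.IsPrincipal.principal (⊤ : Submodule R M)
  have exists_smul_eq (x : M) : ∃ r : R, r • v = x :=
    Submodule.mem_span_singleton.mp (hv ▸ Submodule.mem_top)
  obtain ⟨r, hr⟩ := exists_smul_eq (φ v)
  refine ⟨r, fun x ↦ ?_⟩
  obtain ⟨s, rfl⟩ := exists_smul_eq x
  rw [map_smul, ← hr, smul_comm]

theorem commute_iff_exists_eq_aeval_of_isPrincipal {R M : Type*} [CommSemiring R]
    [AddCommMonoid M] [Module R M] (f : Module.End R M) [Module.IsPrincipal R[X] (AEval' f)]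
    (g : Module.End R M) : Commute f g ↔ ∃ P : R[X], g = aeval f P := by
  constructor
  · intro hfg
    let φ : AEval' f →ₗ[R[X]] AEval' f :=
      LinearMap.ofAEval f ((AEval'.of f).toLinearMap ∘ₗ g) fun m ↦ by
        have hgf : g (f m) = f (g m) := LinearMap.congr_fun hfg.eq.symm m
        simp [hgf, AEval'.X_smul_of]
    obtain ⟨P, hP⟩ := exists_forall_apply_eq_smul_of_isPrincipal φ
    exact ⟨P, LinearMap.ext fun m ↦ (AEval'.of f).injective (hP (AEval'.of f m))⟩
  · rintro ⟨P, rfl⟩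
    simpa using (Commute.all X P).map (aeval f)

section Field

variable {K V : Type*} [Field K] [AddCommGroup V] [Module K V] [FiniteDimensional K V]
  (f : Module.End K V)

theorem exists_finrank_span_singleton_eq_natDegree_minpoly :
    ∃ v : AEval' f, finrank K (Submodule.span K[X] {v}) = (minpoly K f).natDegree := by
  obtain ⟨v, hv⟩ := exists_ker_toSpanSingleton_eq_annihilator K[X] (AEval' f)
  have torsionOf_eq : Ideal.torsionOf K[X] (AEval' f) v = Ideal.span {minpoly K f} :=
    hv.trans (span_minpoly_eq_annihilator K f).symm
  refine ⟨v, ?_⟩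
  rw [← finrank_quotient_span_eq_natDegree, ← torsionOf_eq]
  exact ((Ideal.quotTorsionOfEquivSpanSingleton K[X] _ v).restrictScalars K).finrank_eq.symm

variable {f} in
theorem isPrincipal_aeval_of_natDegree_minpoly_eq_finrank
    (hf : (minpoly K f).natDegree = finrank K V) : Module.IsPrincipal K[X] (AEval' f) := by
  obtain ⟨v, hv⟩ := exists_finrank_span_singleton_eq_natDegree_minpoly f
  have span_eq_top : (Submodule.span K[X] {v}).restrictScalars K = ⊤ :=
    Submodule.eq_top_of_finrank_eq (hv.trans (hf.trans (AEval'.of f).finrank_eq))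
  exact ⟨v, ((Submodule.restrictScalars_eq_top_iff ..).mp span_eq_top).symm⟩

theorem ker_adjoint_eq_polynomials_general
    (hf : (minpoly K f).natDegree = finrank K V) (g : Module.End K V) :
    f * g = g * f ↔ ∃ P : K[X], g = aeval f P :=
  have := isPrincipal_aeval_of_natDegree_minpoly_eq_finrank hf
  commute_iff_exists_eq_aeval_of_isPrincipal f g

end Field

/-- Let `V` be a finite-dimensional complex vector space of dimension `r`
and `f : V → V` a linear endomorphism whose minimal polynomial has degree `r`.
Then a linear endomorphism `g` satisfies `f ∘ g = g ∘ f` if and only if `g` is a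
polynomial in `f`; i.e. `ker (ad f)` equals the subalgebra of polynomials in `f`. -/
theorem ker_adjoint_eq_polynomials
    (V : Type*) [AddCommGroup V] [Module ℂ V] [FiniteDimensional ℂ V]
    (f : Module.End ℂ V)
    (hf : (minpoly ℂ f).natDegree = Module.finrank ℂ V)
    (g : Module.End ℂ V) :
    f * g = g * f ↔ ∃ P : Polynomial ℂ, g = Polynomial.aeval f P :=
  ker_adjoint_eq_polynomials_general f hf g
end

section
/- Let V be a finite-dimensional complex vector space, f : V → V a linear endomorphism whose minimal polynomial has degree dim V, θ : V* → V a symmetric linear isomorphism and κ : V → V* a symmetric linear map with f = θ ∘ κ. Let τ, τ' : V* → V and ξ, ξ' : V → V* be symmetric linear maps, and let g, g' ∈ End(V) satisfy f∘g − g∘f = θ∘ξ + τ∘κ and f∘g' − g'∘f = θ∘ξ' + τ'∘κ. Then Tr(f ∘ (g∘g' − g'∘g)) = (1/2)·(Tr(τ∘ξ') − Tr(τ'∘ξ)). (This identifies the pairing (1/2)Tr(τ∘ξ' − τ'∘ξ) with the Kirillov–Kostant symplectic form Tr(f∘[g,g']) on the adjoint orbit of f.) -/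
/-!
The endomorphisms of `V` act infinitesimally on bilinear forms `κ : V → V*` by
`g ⋆ κ = κ g + gᵀ κ` and on bilinear forms `θ : V* → V` on the dual by `g ⋆ θ = g θ + θ gᵀ`, and
`[θ κ, g] = θ (g ⋆ κ) - (g ⋆ θ) κ`. The equation for `g'` thus says that the symmetric maps
`A = g' ⋆ κ - ξ'` and `B = g' ⋆ θ + τ'` satisfy `θ A = B κ`. Since
`Tr (f [g, g']) = Tr ([f, g] g')`, transposing under the trace gives
`2 Tr (f [g, g']) = Tr ((g' ⋆ θ) ξ) + Tr (τ (g' ⋆ κ)) = Tr (τ ξ') - Tr (τ' ξ) + Tr (B ξ + τ A)`.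
The last trace vanishes: transposing `θ A = B κ` gives `A θ = κ B`, so `b = B θ⁻¹` commutes
with `f`, and `Tr (B ξ + τ A) = Tr (b [f, g]) = Tr ([b, f] g)`.
-/

open Module LinearMap

section SymmetricMaps

variable {R V : Type*} [CommRing R] [AddCommGroup V] [Module R V]

/-- The infinitesimal action `κ g + gᵀ κ` of an endomorphism `g` on a bilinear form on `V`,
encoded as a map `κ : V → V*`. The sign is opposite to that of the contragredient action. -/
def formAction (g : End R V) (κ : V →ₗ[R] Dual R V) : V →ₗ[R] Dual R V :=
  κ ∘ₗ g + g.dualMap ∘ₗ κ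

/-- The infinitesimal action `g θ + θ gᵀ` of an endomorphism `g` of `V` on a bilinear form on `V*`,
encoded as a map `θ : V* → V`. -/
def dualFormAction (g : End R V) (θ : Dual R V →ₗ[R] V) : Dual R V →ₗ[R] V :=
  g ∘ₗ θ + θ ∘ₗ g.dualMap

theorem formAction_symm {κ : V →ₗ[R] Dual R V} (hκ : ∀ v w, κ v w = κ w v) (g : End R V)
    (v w : V) : formAction g κ v w = formAction g κ w v := by
  simp only [formAction, LinearMap.add_apply, comp_apply, dualMap_apply]
  rw [hκ (g v), hκ v, add_comm]

theorem dualFormAction_symm {θ : Dual R V →ₗ[R] V} (hθ : ∀ φ ψ : Dual R V, ψ (θ φ) = φ (θ ψ))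
    (g : End R V) (φ ψ : Dual R V) :
    ψ (dualFormAction g θ φ) = φ (dualFormAction g θ ψ) := by
  simp only [dualFormAction, LinearMap.add_apply, comp_apply, map_add]
  rw [hθ (g.dualMap φ), ← dualMap_apply g ψ, hθ φ, dualMap_apply, add_comm]

theorem commutator_eq_comp_formAction_sub (θ : Dual R V →ₗ[R] V) (κ : V →ₗ[R] Dual R V)
    (g : End R V) :
    (θ ∘ₗ κ) ∘ₗ g - g ∘ₗ θ ∘ₗ κ = θ ∘ₗ formAction g κ - dualFormAction g θ ∘ₗ κ := by
  simp only [formAction, dualFormAction, comp_add, add_comp, comp_assoc]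
  abel

theorem comp_eq_comp_swap_of_symm {θ B : Dual R V →ₗ[R] V} {κ A : V →ₗ[R] Dual R V}
    (hθ : ∀ φ ψ : Dual R V, ψ (θ φ) = φ (θ ψ)) (hB : ∀ φ ψ : Dual R V, ψ (B φ) = φ (B ψ))
    (hκ : ∀ v w, κ v w = κ w v) (hA : ∀ v w, A v w = A w v) (h : θ ∘ₗ A = B ∘ₗ κ) :
    A ∘ₗ θ = κ ∘ₗ B := by
  ext φ v
  calc A (θ φ) v = φ (θ (A v)) := by rw [hA, hθ]
    _ = φ (B (κ v)) := congrArg φ (LinearMap.congr_fun h v)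
    _ = κ (B φ) v := by rw [hB, hκ]

theorem trace_comp_add_trace_comp_eq_zero {W : Type*} [AddCommGroup W] [Module R W]
    {θ τ B : W →ₗ[R] V} {κ ξ A : V →ₗ[R] W}
    (hθ : Function.Bijective θ) (hθA : θ ∘ₗ A = B ∘ₗ κ) (hAθ : A ∘ₗ θ = κ ∘ₗ B) {g : End R V}
    (hg : (θ ∘ₗ κ) ∘ₗ g - g ∘ₗ θ ∘ₗ κ = θ ∘ₗ ξ + τ ∘ₗ κ) :
    trace R V (B ∘ₗ ξ) + trace R V (τ ∘ₗ A) = 0 := by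
  obtain ⟨b, rfl⟩ : ∃ b : End R V, b ∘ₗ θ = B :=
    let e := LinearEquiv.ofBijective θ hθ
    ⟨B ∘ₗ e.symm, LinearMap.ext fun φ ↦ congrArg B (e.symm_apply_apply φ)⟩
  obtain rfl : A = κ ∘ₗ b := (cancel_right hθ.surjective).mp hAθ
  have commute : b ∘ₗ θ ∘ₗ κ - (θ ∘ₗ κ) ∘ₗ b = 0 := sub_eq_zero.mpr hθA.symm
  calc trace R V ((b ∘ₗ θ) ∘ₗ ξ) + trace R V (τ ∘ₗ κ ∘ₗ b)
      = trace R V (b ∘ₗ (θ ∘ₗ ξ + τ ∘ₗ κ)) := by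
        rw [comp_add, map_add, comp_assoc, ← comp_assoc b κ τ]
        exact congrArg _ (trace_mul_comm R (τ ∘ₗ κ) b)
    _ = trace R V (b ∘ₗ ((θ ∘ₗ κ) ∘ₗ g - g ∘ₗ θ ∘ₗ κ)) := by rw [hg]
    _ = trace R V ((b ∘ₗ θ ∘ₗ κ - (θ ∘ₗ κ) ∘ₗ b) ∘ₗ g) := (trace_lie_mul_eq b (θ ∘ₗ κ) g).symm
    _ = 0 := by rw [commute, zero_comp, map_zero]

variable [Module.Free R V] [Module.Finite R V]

theorem trace_comp_comp_eq_trace_dualMap {σ : Dual R V →ₗ[R] V} {η : V →ₗ[R] Dual R V}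
    (hσ : ∀ φ ψ : Dual R V, ψ (σ φ) = φ (σ ψ)) (hη : ∀ v w, η v w = η w v) (g : End R V) :
    trace R V (σ ∘ₗ η ∘ₗ g) = trace R V (σ ∘ₗ g.dualMap ∘ₗ η) := by
  have transpose_eq : Dual.transpose (R := R) (σ ∘ₗ η ∘ₗ g) = (g.dualMap ∘ₗ η) ∘ₗ σ := by
    ext φ v
    calc φ (σ (η (g v))) = η (g v) (σ φ) := hσ _ _
      _ = η (σ φ) (g v) := hη _ _
  rw [← trace_transpose', transpose_eq, trace_comp_comm']

theorem two_mul_trace_comp_eq_trace_actions {θ τ : Dual R V →ₗ[R] V} {κ ξ : V →ₗ[R] Dual R V}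
    (hθ : ∀ φ ψ : Dual R V, ψ (θ φ) = φ (θ ψ)) (hτ : ∀ φ ψ : Dual R V, ψ (τ φ) = φ (τ ψ))
    (hκ : ∀ v w, κ v w = κ w v) (hξ : ∀ v w, ξ v w = ξ w v) (g : End R V) :
    2 * trace R V ((θ ∘ₗ ξ + τ ∘ₗ κ) ∘ₗ g) =
      trace R V (dualFormAction g θ ∘ₗ ξ) + trace R V (τ ∘ₗ formAction g κ) := by
  have hθξ := trace_comp_comp_eq_trace_dualMap hθ hξ g
  have hτκ := trace_comp_comp_eq_trace_dualMap hτ hκ g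
  have cyclic : trace R V (g ∘ₗ θ ∘ₗ ξ) = trace R V (θ ∘ₗ ξ ∘ₗ g) := trace_comp_comm' _ _
  simp only [formAction, dualFormAction, add_comp, comp_add, comp_assoc, map_add]
  linear_combination hθξ + hτκ - cyclic

theorem kirillov_kostant_form_eq_general {f : End R V} {θ : Dual R V →ₗ[R] V}
    {κ : V →ₗ[R] Dual R V} (hθbij : Function.Bijective θ)
    (hθ : ∀ φ ψ : Dual R V, ψ (θ φ) = φ (θ ψ)) (hκ : ∀ v w, κ v w = κ w v) (hf : f = θ ∘ₗ κ)
    {τ τ' : Dual R V →ₗ[R] V} {ξ ξ' : V →ₗ[R] Dual R V}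
    (hτ : ∀ φ ψ : Dual R V, ψ (τ φ) = φ (τ ψ)) (hτ' : ∀ φ ψ : Dual R V, ψ (τ' φ) = φ (τ' ψ))
    (hξ : ∀ v w, ξ v w = ξ w v) (hξ' : ∀ v w, ξ' v w = ξ' w v) {g g' : End R V}
    (hg : f ∘ₗ g - g ∘ₗ f = θ ∘ₗ ξ + τ ∘ₗ κ) (hg' : f ∘ₗ g' - g' ∘ₗ f = θ ∘ₗ ξ' + τ' ∘ₗ κ) :
    2 * trace R V (f ∘ₗ (g ∘ₗ g' - g' ∘ₗ g)) = trace R V (τ ∘ₗ ξ') - trace R V (τ' ∘ₗ ξ) := by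
  subst hf
  set A := formAction g' κ - ξ' with hA
  set B := dualFormAction g' θ + τ' with hB
  have A_symm (v w : V) : A v w = A w v := by
    simp only [hA, LinearMap.sub_apply, formAction_symm hκ g' v, hξ' v]
  have B_symm (φ ψ : Dual R V) : ψ (B φ) = φ (B ψ) := by
    simp only [hB, LinearMap.add_apply, map_add, dualFormAction_symm hθ g' φ, hτ' φ]
  have hθA : θ ∘ₗ A = B ∘ₗ κ := by
    rw [commutator_eq_comp_formAction_sub, sub_eq_iff_eq_add] at hg'
    rw [hA, hB, comp_sub, add_comp, hg']
    abel
  have hAθ : A ∘ₗ θ = κ ∘ₗ B := comp_eq_comp_swap_of_symm hθ B_symm hκ A_symm hθA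
  have trace_zero := trace_comp_add_trace_comp_eq_zero hθbij hθA hAθ hg
  have trace_invariant : trace R V ((θ ∘ₗ κ) ∘ₗ (g ∘ₗ g' - g' ∘ₗ g)) =
      trace R V (((θ ∘ₗ κ) ∘ₗ g - g ∘ₗ θ ∘ₗ κ) ∘ₗ g') := (trace_lie_mul_eq (θ ∘ₗ κ) g g').symm
  rw [trace_invariant, hg, two_mul_trace_comp_eq_trace_actions hθ hτ hκ hξ]
  simp only [hA, hB, add_comp, comp_sub, map_add, map_sub] at trace_zero
  linear_combination trace_zero

end SymmetricMaps

/-- With `f = θ ∘ κ` a symmetric factorization of an endomorphism whose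
minimal polynomial has degree `dim V`, and symmetric maps `τ, τ', ξ, ξ'` together with
`g, g'` satisfying `f∘g − g∘f = θ∘ξ + τ∘κ` and `f∘g' − g'∘f = θ∘ξ' + τ'∘κ`, the
Kirillov–Kostant pairing `Tr(f ∘ [g, g'])` equals `(1/2)(Tr(τ∘ξ') − Tr(τ'∘ξ))`. -/
theorem kirillov_kostant_form_eq
    (V : Type*) [AddCommGroup V] [Module ℂ V] [FiniteDimensional ℂ V]
    (f : Module.End ℂ V)
    (hf : (minpoly ℂ f).natDegree = Module.finrank ℂ V)
    (θ : Module.Dual ℂ V →ₗ[ℂ] V) (κ : V →ₗ[ℂ] Module.Dual ℂ V)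
    (hθbij : Function.Bijective θ)
    (hθsym : ∀ φ ψ : Module.Dual ℂ V, ψ (θ φ) = φ (θ ψ))
    (hκsym : ∀ v w : V, κ v w = κ w v)
    (hfθκ : f = θ ∘ₗ κ)
    (τ τ' : Module.Dual ℂ V →ₗ[ℂ] V) (ξ ξ' : V →ₗ[ℂ] Module.Dual ℂ V)
    (hτsym : ∀ φ ψ : Module.Dual ℂ V, ψ (τ φ) = φ (τ ψ))
    (hτ'sym : ∀ φ ψ : Module.Dual ℂ V, ψ (τ' φ) = φ (τ' ψ))
    (hξsym : ∀ v w : V, ξ v w = ξ w v)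
    (hξ'sym : ∀ v w : V, ξ' v w = ξ' w v)
    (g g' : Module.End ℂ V)
    (hg : f ∘ₗ g - g ∘ₗ f = θ ∘ₗ ξ + τ ∘ₗ κ)
    (hg' : f ∘ₗ g' - g' ∘ₗ f = θ ∘ₗ ξ' + τ' ∘ₗ κ) :
    LinearMap.trace ℂ V (f ∘ₗ (g ∘ₗ g' - g' ∘ₗ g)) =
      (1 / 2 : ℂ) *
        (LinearMap.trace ℂ V (τ ∘ₗ ξ') - LinearMap.trace ℂ V (τ' ∘ₗ ξ)) := by
  rw [← kirillov_kostant_form_eq_general hθbij hθsym hκsym hfθκ hτsym hτ'sym hξsym hξ'sym hg hg']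
  ring
end

section
/- Let m ≥ 1 and q ≥ 0 be integers, let ε be a complex number, and let R be a real number with |ε| < R. Then ∮_{|z|=R} z^q/(z^m − ε^m) dz = 2πi·ε^{q+1−m} if m divides q+1, and ∮_{|z|=R} z^q/(z^m − ε^m) dz = 0 otherwise. (Note that if m divides q+1 then q+1−m ≥ 0, so ε^{q+1−m} is an ordinary natural power, with ε⁰ = 1.) -/
open Complex

/-!
On the circle `|z| = R > |ε|` the integrand is the uniformly convergent geometric series
`z^q / (z^m - ε^m) = ∑ₖ ε^(mk) z^(q - m(k+1))`. Integrating term by term, only the exponent `-1`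
contributes, that is, the index `k` with `m(k+1) = q+1`, if there is one.
-/

open Metric

lemma circleIntegral_sub_center_zpow (c : ℂ) {R : ℝ} (hR : R ≠ 0) (n : ℤ) :
    (∮ z in C(c, R), (z - c) ^ n) = if n = -1 then 2 * Real.pi * I else 0 := by
  split_ifs with hn
  · simpa only [hn, zpow_neg_one] using circleIntegral.integral_sub_center_inv c hR
  · exact circleIntegral.integral_sub_zpow_of_ne hn c c R

lemma hasSum_circleIntegral_of_summable_bound {ι E : Type*} [Countable ι]
    [NormedAddCommGroup E] [NormedSpace ℂ E] [CompleteSpace E]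
    {f : ι → ℂ → E} {u : ι → ℝ} {c : ℂ} {R : ℝ} (hR : 0 ≤ R)
    (hf : ∀ i, ContinuousOn (f i) (sphere c R))
    (hu : Summable u) (hfu : ∀ i, ∀ z ∈ sphere c R, ‖f i z‖ ≤ u i) :
    HasSum (fun i ↦ ∮ z in C(c, R), f i z) (∮ z in C(c, R), ∑' i, f i z) := by
  have partialSum_integral (s : Finset ι) :
      (∮ z in C(c, R), ∑ i ∈ s, f i z) = ∑ i ∈ s, ∮ z in C(c, R), f i z :=
    circleIntegral.integral_fun_sum fun i _ ↦ (hf i).circleIntegrable hR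
  have := (tendstoUniformlyOn_tsum hu hfu).tendsto_circleIntegral_of_continuousOn hR
    (.of_forall fun s ↦ continuousOn_finsetSum s fun i _ ↦ hf i)
  simpa only [HasSum, SummationFilter.unconditional_filter, partialSum_integral] using this

lemma hasSum_zpow_div_pow_sub {K : Type*} [NormedField K] {m : ℕ} (q : ℤ)
    {a z : K} (hz : z ≠ 0) (ha : ‖a‖ < ‖z‖ ^ m) :
    HasSum (fun k : ℕ ↦ a ^ k * z ^ (q - m * (k + 1))) (z ^ q / (z ^ m - a)) := by
  have hratio : ‖a / z ^ m‖ < 1 := by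
    rwa [norm_div, norm_pow, div_lt_one (by positivity)]
  have hsub : z ^ m - a ≠ 0 := by
    rw [sub_ne_zero]
    rintro rfl
    exact ha.ne (norm_pow z m)
  have term_eq (k : ℕ) :
      a ^ k * z ^ (q - m * (k + 1)) = z ^ q / z ^ m * (a / z ^ m) ^ k := by
    rw [zpow_sub₀ hz, zpow_mul, zpow_natCast, ← Nat.cast_succ, zpow_natCast, pow_succ, div_pow]
    field_simp
  have sum_eq : z ^ q / (z ^ m - a) = z ^ q / z ^ m * (1 - a / z ^ m)⁻¹ := by
    field_simp
  simp only [term_eq, sum_eq]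
  exact (hasSum_geometric_of_norm_lt_one hratio).mul_left _

section

variable {m : ℕ} {a : ℂ} {R : ℝ}

lemma hasSum_circleIntegral_zpow_div_pow_sub (q : ℤ) (hR : 0 < R) (ha : ‖a‖ < R ^ m) :
    HasSum (fun k : ℕ ↦ if q + 1 = m * (k + 1) then 2 * Real.pi * I * a ^ k else 0)
      (∮ z in C(0, R), z ^ q / (z ^ m - a)) := by
  have norm_eq {z : ℂ} (hz : z ∈ sphere 0 R) : ‖z‖ = R := mem_sphere_zero_iff_norm.1 hz
  have ne_zero {z : ℂ} (hz : z ∈ sphere 0 R) : z ≠ 0 := ne_zero_of_mem_sphere hR.ne' ⟨z, hz⟩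
  have summable_bound : Summable fun k : ℕ ↦ ‖a‖ ^ k * R ^ (q - m * (k + 1)) :=
    (hasSum_zpow_div_pow_sub q hR.ne' (by simpa [abs_of_pos hR] using ha)).summable
  have integral_tsum : (∮ z in C(0, R), ∑' k : ℕ, a ^ k * z ^ (q - m * (k + 1))) =
      ∮ z in C(0, R), z ^ q / (z ^ m - a) :=
    circleIntegral.integral_congr hR.le fun z hz ↦
      (hasSum_zpow_div_pow_sub q (ne_zero hz) (by rwa [norm_eq hz])).tsum_eq
  have integral_term (k : ℕ) : (∮ z in C(0, R), a ^ k * z ^ (q - m * (k + 1))) =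
      if q + 1 = m * (k + 1) then 2 * Real.pi * I * a ^ k else 0 := by
    have := circleIntegral_sub_center_zpow 0 hR.ne' (q - m * (k + 1))
    simp only [sub_zero] at this
    rw [circleIntegral.integral_const_mul, this, mul_ite, mul_zero]
    exact if_congr (by lia) (mul_comm _ _) rfl
  simp only [← integral_term, ← integral_tsum]
  refine hasSum_circleIntegral_of_summable_bound hR.le (fun k z hz ↦ ?_) summable_bound
    fun k z hz ↦ ?_
  · exact ((continuousAt_zpow₀ z _ (.inl (ne_zero hz))).const_mul _).continuousWithinAt
  · rw [norm_mul, norm_pow, norm_zpow, norm_eq hz]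

variable {q : ℤ}

lemma circleIntegral_zpow_div_pow_sub_of_eq (hm : m ≠ 0) (hR : 0 < R) (ha : ‖a‖ < R ^ m)
    {k : ℕ} (hk : q + 1 = m * (k + 1)) :
    (∮ z in C(0, R), z ^ q / (z ^ m - a)) = 2 * Real.pi * I * a ^ k := by
  have index_unique (j : ℕ) (hj : j ≠ k) : q + 1 ≠ m * (j + 1) := by
    rw [hk]
    simpa [hm] using hj.symm
  have := (hasSum_circleIntegral_zpow_div_pow_sub q hR ha).unique
    (hasSum_single k fun j hj ↦ if_neg (index_unique j hj))
  rwa [if_pos hk] at this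

lemma circleIntegral_zpow_div_pow_sub_of_forall_ne (hR : 0 < R) (ha : ‖a‖ < R ^ m)
    (hq : ∀ k : ℕ, q + 1 ≠ m * (k + 1)) :
    (∮ z in C(0, R), z ^ q / (z ^ m - a)) = 0 := by
  have := hasSum_circleIntegral_zpow_div_pow_sub q hR ha
  simp only [hq, if_false] at this
  exact this.unique hasSum_zero

end

theorem circleIntegral_pow_div_pow_sub_pow_general {m : ℕ} (hm : m ≠ 0) (q : ℤ) {ε : ℂ} {R : ℝ}
    (hε : ‖ε‖ < R) :
    (∮ z in C(0, R), z ^ q / (z ^ m - ε ^ m)) =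
      if 0 ≤ q ∧ (m : ℤ) ∣ q + 1 then 2 * Real.pi * I * ε ^ (q + 1 - m).toNat else 0 := by
  have hR : 0 < R := (norm_nonneg ε).trans_lt hε
  have hεm : ‖ε ^ m‖ < R ^ m := by
    rw [norm_pow]
    exact pow_lt_pow_left₀ hε (norm_nonneg ε) hm
  have hm_pos : (0 : ℤ) < m := by positivity
  split_ifs with hq
  · obtain ⟨hq_nonneg, d, hd⟩ := hq
    have hd_pos : 0 < d := pos_of_mul_pos_right (by lia : 0 < m * d) hm_pos.le
    obtain ⟨k, rfl⟩ : ∃ k : ℕ, d = k + 1 := ⟨(d - 1).toNat, by lia⟩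
    rw [circleIntegral_zpow_div_pow_sub_of_eq hm hR hεm hd, hd, ← pow_mul]
    congr 2
    lia
  · refine circleIntegral_zpow_div_pow_sub_of_forall_ne hR hεm fun k hk ↦ hq ⟨?_, k + 1, hk⟩
    have : (0 : ℤ) < m * (k + 1) := by positivity
    lia

/-- Let `m ≥ 1`, `q ≥ 0`, `ε ∈ ℂ` and `R ∈ ℝ` with `|ε| < R`.  Then
`∮_{|z|=R} z^q/(z^m − ε^m) dz = 2πi·ε^(q+1−m)` if `m ∣ q+1` and `= 0` otherwise. -/
theorem circleIntegral_pow_div_pow_sub_pow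
    (m q : ℕ) (hm : 1 ≤ m) (ε : ℂ) (R : ℝ) (hε : ‖ε‖ < R) :
    (∮ z in C(0, R), z ^ q / (z ^ m - ε ^ m)) =
      if m ∣ q + 1 then (2 * Real.pi * Complex.I) * ε ^ (q + 1 - m) else 0 := by
  simpa only [zpow_natCast, Int.natCast_nonneg, true_and, ← Nat.cast_succ,
    Int.natCast_dvd_natCast, Int.toNat_sub] using
    circleIntegral_pow_div_pow_sub_pow_general (Nat.one_le_iff_ne_zero.1 hm) q hε
end

section
/- Let V be a finite-dimensional complex vector space and let A₁, …, A_m (m ≥ 1) be linear endomorphisms of V such that the only endomorphisms commuting with every Aⱼ are the scalar multiples of the identity, i.e. ⋂_{j=1}^m ker(ad(Aⱼ)) = ℂ·id. Then ∑_{j=1}^m im(ad(Aⱼ)) = ker(Tr : End(V) → ℂ); that is, an endomorphism Y of V can be written as Y = ∑_{j=1}^m (Aⱼ∘Xⱼ − Xⱼ∘Aⱼ) for some X₁, …, X_m ∈ End(V) if and only if Tr(Y) = 0. -/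
/-!
For an invariant nondegenerate symmetric bilinear form on a Lie algebra `L`, every `ad x` is
skew-adjoint, so the orthogonal complement of `∑ⱼ im (ad xⱼ)` is `⋂ⱼ ker (ad xⱼ)`, and taking
complements again gives `∑ⱼ im (ad xⱼ) = (⋂ⱼ ker (ad xⱼ))ᗮ`. On `End V` the form `Tr (X ∘ Y)`
qualifies; it is nondegenerate because `Tr (X ∘ (φ ⊗ v)) = φ (X v)`. When the common centralizer
consists of the scalars, its complement is `(K · id)ᗮ = ker Tr`.
-/

open LinearMap (trace)
open Module (End)

theorem orthogonal_iSup {R M : Type*} {ι : Sort*} [CommSemiring R] [AddCommMonoid M] [Module R M]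
    (B : LinearMap.BilinForm R M) (N : ι → Submodule R M) :
    B.orthogonal (⨆ i, N i) = ⨅ i, B.orthogonal (N i) := by
  refine le_antisymm (le_iInf fun i ↦ B.orthogonal_le (le_iSup N i)) fun y hy x hx ↦ ?_
  have iSup_le_ker : ⨆ i, N i ≤ LinearMap.ker (B.flip y) :=
    iSup_le fun i z hz ↦ (Submodule.mem_iInf _).mp hy i z hz
  exact iSup_le_ker hx

theorem orthogonal_range_toEnd {R L M : Type*} [CommRing R] [LieRing L] [LieAlgebra R L]
    [AddCommGroup M] [Module R M] [LieRingModule L M] [LieModule R L M]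
    {B : LinearMap.BilinForm R M} (hB : B.SeparatingRight) (hinv : B.lieInvariant L) (x : L) :
    B.orthogonal (LinearMap.range (LieModule.toEnd R L M x)) =
      LinearMap.ker (LieModule.toEnd R L M x) := by
  ext y
  calc y ∈ B.orthogonal (LinearMap.range (LieModule.toEnd R L M x))
      ↔ ∀ z, B ⁅x, z⁆ y = 0 := by simp
    _ ↔ ∀ z, B z ⁅x, y⁆ = 0 := by simp only [hinv x, neg_eq_zero]
    _ ↔ ⁅x, y⁆ = 0 := ⟨hB _, fun h ↦ by simp [h]⟩

theorem iSup_range_toEnd_eq_orthogonal_iInf_ker {K L M : Type*} {ι : Sort*} [Field K] [LieRing L]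
    [LieAlgebra K L] [AddCommGroup M] [Module K M] [FiniteDimensional K M] [LieRingModule L M]
    [LieModule K L M] {B : LinearMap.BilinForm K M} (hB : B.Nondegenerate) (hrefl : B.IsRefl)
    (hinv : B.lieInvariant L) (x : ι → L) :
    ⨆ i, LinearMap.range (LieModule.toEnd K L M (x i)) =
      B.orthogonal (⨅ i, LinearMap.ker (LieModule.toEnd K L M (x i))) := by
  simp only [← orthogonal_range_toEnd hB.2 hinv, ← orthogonal_iSup,
    LinearMap.BilinForm.orthogonal_orthogonal hB hrefl]

theorem mem_iSup_range_iff_exists_sum {R N ι : Type*} {M : ι → Type*} [Fintype ι] [Semiring R]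
    [∀ i, AddCommMonoid (M i)] [∀ i, Module R (M i)] [AddCommMonoid N] [Module R N]
    (f : ∀ i, M i →ₗ[R] N) (y : N) :
    y ∈ ⨆ i, LinearMap.range (f i) ↔ ∃ x : ∀ i, M i, y = ∑ i, f i (x i) := by
  constructor
  · intro hy
    obtain ⟨μ, hμ⟩ := (Submodule.mem_iSup_finset_iff_exists_sum (s := .univ) _ y).mp
      (by simpa using hy)
    choose x hx using fun i ↦ (μ i).2
    exact ⟨x, by simp only [hx, hμ]⟩
  · rintro ⟨x, rfl⟩
    exact Submodule.sum_mem _ fun i _ ↦ Submodule.mem_iSup_of_mem i (LinearMap.mem_range_self _ _)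

section TraceForm

attribute [local instance] LieRing.ofAssociativeRing

variable {R M : Type*} [CommRing R] [AddCommGroup M] [Module R M]

theorem traceForm_end_apply (f g : End R M) :
    LieModule.traceForm R (End R M) M f g = trace R M (f * g) :=
  rfl

theorem traceForm_end_nondegenerate [Module.Free R M] [Module.Finite R M] :
    (LieModule.traceForm R (End R M) M).Nondegenerate := by
  have separatingLeft : (LieModule.traceForm R (End R M) M).SeparatingLeft := by
    intro f hf
    ext v
    refine (Module.forall_dual_apply_eq_zero_iff R (f v)).mp fun φ ↦ ?_
    calc φ (f v) = trace R M (φ.smulRight (f v)) := (LinearMap.trace_smulRight φ (f v)).symm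
      _ = trace R M (f * φ.smulRight v) := by congr 1; ext w; simp
      _ = 0 := hf (φ.smulRight v)
  exact (LieModule.traceForm_isSymm R (End R M) M).isRefl.nondegenerate_iff_separatingLeft.mpr
    separatingLeft

theorem orthogonal_traceForm_span_one :
    (LieModule.traceForm R (End R M) M).orthogonal (R ∙ (1 : End R M)) =
      LinearMap.ker (trace R M) := by
  ext f
  calc f ∈ (LieModule.traceForm R (End R M) M).orthogonal (R ∙ (1 : End R M))
      ↔ ∀ c : R, c * trace R M f = 0 := by simp [Submodule.mem_span_singleton, traceForm_end_apply]
    _ ↔ trace R M f = 0 := ⟨fun h ↦ by simpa using h 1, fun h c ↦ by simp [h]⟩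

theorem iInf_ker_ad_eq_span_one_iff {ι : Sort*} (A : ι → End R M) :
    ⨅ j, LinearMap.ker (LieAlgebra.ad R (End R M) (A j)) = R ∙ (1 : End R M) ↔
      ∀ X : End R M, (∀ j, A j * X = X * A j) → ∃ c : R, X = c • (1 : End R M) := by
  have mem_iInf_ker_ad (X : End R M) :
      X ∈ ⨅ j, LinearMap.ker (LieAlgebra.ad R (End R M) (A j)) ↔ ∀ j, A j * X = X * A j := by
    simp [Ring.lie_def, sub_eq_zero]
  have span_one_le : R ∙ (1 : End R M) ≤ ⨅ j, LinearMap.ker (LieAlgebra.ad R (End R M) (A j)) := by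
    rw [Submodule.span_singleton_le_iff_mem, mem_iInf_ker_ad]
    simp
  rw [← span_one_le.ge_iff_eq']
  simp only [SetLike.le_def, mem_iInf_ker_ad, Submodule.mem_span_singleton, eq_comm]

theorem iSup_range_ad_eq_ker_trace {K V : Type*} {ι : Sort*} [Field K] [AddCommGroup V]
    [Module K V] [FiniteDimensional K V] {A : ι → End K V}
    (hA : ⨅ j, LinearMap.ker (LieAlgebra.ad K (End K V) (A j)) = K ∙ (1 : End K V)) :
    ⨆ j, LinearMap.range (LieAlgebra.ad K (End K V) (A j)) = LinearMap.ker (trace K V) := by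
  rw [← orthogonal_traceForm_span_one, ← hA]
  exact iSup_range_toEnd_eq_orthogonal_iInf_ker traceForm_end_nondegenerate
    (LieModule.traceForm_isSymm K (End K V) V).isRefl
    (LieModule.traceForm_lieInvariant K (End K V) V) A

theorem sum_image_adjoint_eq_ker_trace_general {K V ι : Type*} [Field K] [AddCommGroup V]
    [Module K V] [FiniteDimensional K V] [Fintype ι] (A : ι → End K V)
    (hA : ∀ X : End K V, (∀ j, A j * X = X * A j) → ∃ c : K, X = c • (1 : End K V))
    (Y : End K V) :
    (∃ X : ι → End K V, Y = ∑ j, (A j * X j - X j * A j)) ↔ trace K V Y = 0 := by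
  have iSup_range_eq_ker := iSup_range_ad_eq_ker_trace ((iInf_ker_ad_eq_span_one_iff A).mpr hA)
  rw [← LinearMap.mem_ker, ← iSup_range_eq_ker, mem_iSup_range_iff_exists_sum]
  simp only [LieAlgebra.ad_apply, Ring.lie_def]

end TraceForm

/-- Let `V` be a finite-dimensional complex vector space and
`A₁, …, A_m` endomorphisms of `V` such that the only endomorphisms commuting with every
`Aⱼ` are the scalars.  Then `∑ⱼ im (ad Aⱼ) = ker Tr`: an endomorphism `Y` is a sum
`∑ⱼ (Aⱼ∘Xⱼ − Xⱼ∘Aⱼ)` if and only if `Tr Y = 0`. -/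
theorem sum_image_adjoint_eq_ker_trace
    (V : Type*) [AddCommGroup V] [Module ℂ V] [FiniteDimensional ℂ V]
    (m : ℕ) (hm : 1 ≤ m) (A : Fin m → Module.End ℂ V)
    (hA : ∀ X : Module.End ℂ V, (∀ j, A j * X = X * A j) →
      ∃ c : ℂ, X = c • (1 : Module.End ℂ V)) :
    ∀ Y : Module.End ℂ V,
      (∃ X : Fin m → Module.End ℂ V, Y = ∑ j, (A j * X j - X j * A j)) ↔
        LinearMap.trace ℂ V Y = 0 :=
  sum_image_adjoint_eq_ker_trace_general A hA
end

section
/- Let R be a (nontrivial) commutative local ring, E a finite free R-module of rank r ≥ 1, and μ₁, …, μ_r elements of R such that μᵢ − μⱼ is a unit of R for all i ≠ j. Let N be an R-linear endomorphism of E with (N − μ₁·id)∘⋯∘(N − μ_r·id) = 0. Then E is the internal direct sum E = ⨁_{k=1}^{r} ker(N − μₖ·id). If moreover the only polynomial P ∈ R[T] of degree < r with P(N) = 0 is the zero polynomial (equivalently, the R-algebra homomorphism R[T]/(∏ₖ(T − μₖ)) → End_R(E) sending T to N is injective), then each ker(N − μₖ·id) is a free R-module of rank 1. -/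
open Polynomial

/-!
Since `μ i - μ j` is a unit, the polynomials `X - C (μ i)` are pairwise coprime, so the kernel of
the product of the `N - μ i` is the direct sum of their kernels over any commutative ring. These
kernels are then finite projective. A scalar `c` killing `ker (N - μ k)` gives the annihilating
polynomial `c * ∏ j ≠ k, (X - C (μ j))` of degree less than `r`, so each kernel is faithful and
therefore has positive rank at every prime. The `r` ranks add up to `r`, so all of them are `1`;
over a local ring such modules are free.
-/

section KerAeval

variable {R E ι : Type*} [CommRing R] [AddCommGroup E] [Module R E] (N : Module.End R E)

theorem aeval_X_sub_C_eq_sub_smul_one (a : R) :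
    aeval N (X - C a) = N - a • (1 : Module.End R E) := by
  simp [Algebra.algebraMap_eq_smul_one]

theorem biSup_ker_aeval_eq_ker_aeval_prod {f : ι → R[X]} {s : Finset ι}
    (hf : (s : Set ι).Pairwise fun i j => IsCoprime (f i) (f j)) :
    ⨆ i ∈ s, LinearMap.ker (aeval N (f i)) = LinearMap.ker (aeval N (∏ i ∈ s, f i)) := by
  classical
  induction s using Finset.induction_on with
  | empty => simp [Module.End.one_eq_id]
  | insert i s hi ih =>
    have hs : (s : Set ι).Pairwise fun i j => IsCoprime (f i) (f j) :=
      hf.mono (by simp)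
    have hcoprime : IsCoprime (f i) (∏ j ∈ s, f j) :=
      IsCoprime.prod_right fun j hj =>
        hf (by simp) (by simp [hj]) (ne_of_mem_of_not_mem hj hi).symm
    rw [Finset.iSup_insert, Finset.prod_insert hi, ih hs,
      sup_ker_aeval_eq_ker_aeval_mul_of_coprime N hcoprime]

theorem isInternal_ker_aeval [Fintype ι] [DecidableEq ι] {f : ι → R[X]}
    (hf : Pairwise fun i j => IsCoprime (f i) (f j)) (hN : aeval N (∏ i, f i) = 0) :
    DirectSum.IsInternal fun i => LinearMap.ker (aeval N (f i)) := by
  refine DirectSum.isInternal_submodule_of_iSupIndep_of_iSup_eq_top (fun i => ?_) ?_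
  · have hcoprime : IsCoprime (f i) (∏ j ∈ Finset.univ.erase i, f j) :=
      IsCoprime.prod_right fun j hj => hf (Finset.ne_of_mem_erase hj).symm
    have hothers := biSup_ker_aeval_eq_ker_aeval_prod N
      (hf.set_pairwise (Finset.univ.erase i : Finset ι))
    simp only [Finset.mem_erase, Finset.mem_univ, and_true] at hothers
    rw [hothers]
    exact disjoint_ker_aeval_of_isCoprime N hcoprime
  · have hall := biSup_ker_aeval_eq_ker_aeval_prod N (hf.set_pairwise (Finset.univ : Finset ι))
    simpa [hN] using hall

theorem faithfulSMul_ker_aeval {n : WithBot ℕ} {p q : R[X]} (hq : q.Monic) (hdeg : q.degree < n)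
    (hpq : aeval N (p * q) = 0)
    (hmin : ∀ P : R[X], P.degree < n → aeval N P = 0 → P = 0) :
    FaithfulSMul R (LinearMap.ker (aeval N p)) := by
  have hmem (x : E) : aeval N q x ∈ LinearMap.ker (aeval N p) := by
    rw [LinearMap.mem_ker, ← Module.End.mul_apply, ← map_mul, hpq, LinearMap.zero_apply]
  rw [← Module.annihilator_eq_bot, eq_bot_iff]
  intro c hc
  have hkill : aeval N (c • q) = 0 := by
    ext x
    simpa using congrArg Subtype.val (Module.mem_annihilator.mp hc ⟨_, hmem x⟩)
  have hzero : c • q = 0 := hmin _ ((degree_smul_le c q).trans_lt hdeg) hkill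
  simpa [hq.coeff_natDegree] using congrArg (coeff · q.natDegree) hzero

end KerAeval

section RankAtStalk

variable {R M ι : Type*} [CommRing R] [AddCommGroup M] [Module R M]

theorem rankAtStalk_pos_of_faithfulSMul [Module.Flat R M] [Module.Finite R M] [FaithfulSMul R M]
    (p : PrimeSpectrum R) : 0 < Module.rankAtStalk M p := by
  rw [Module.rankAtStalk_pos_iff_mem_support, Module.support_eq_zeroLocus,
    Module.annihilator_eq_bot.mpr inferInstance]
  simp

theorem free_and_finrank_eq_of_rankAtStalk_eq [IsLocalRing R] [Module.Flat R M] [Module.Finite R M]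
    {n : ℕ} (h : Module.rankAtStalk (R := R) M = n) :
    Module.Free R M ∧ Module.finrank R M = n := by
  have hfree : Module.Free R M := Module.free_of_flat_of_isLocalRing
  rw [Module.rankAtStalk_eq_finrank_of_free] at h
  exact ⟨hfree, congrFun h (IsLocalRing.closedPoint R)⟩

variable [DecidableEq ι] {A : ι → Submodule R M}

theorem projective_of_isInternal [Module.Projective R M] (hA : DirectSum.IsInternal A) (i : ι) :
    Module.Projective R (A i) :=
  Module.Projective.directSum_iff.mp
    (.of_equiv (LinearEquiv.ofBijective (DirectSum.coeLinearMap A) hA).symm) i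

theorem finite_of_isInternal [Module.Finite R M] (hA : DirectSum.IsInternal A) (i : ι) :
    Module.Finite R (A i) := by
  have hfinite : Module.Finite R (DirectSum ι fun i => A i) :=
    .equiv (LinearEquiv.ofBijective (DirectSum.coeLinearMap A) hA).symm
  exact .of_surjective (DirectSum.component R ι (fun i => A i) i)
    fun x => ⟨_, DirectSum.component.lof_self (M := fun i => A i) R i x⟩

variable [Fintype ι] [∀ i, Module.Flat R (A i)] [∀ i, Module.Finite R (A i)]

theorem sum_rankAtStalk_of_isInternal (hA : DirectSum.IsInternal A) (p : PrimeSpectrum R) :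
    ∑ i, Module.rankAtStalk (A i) p = Module.rankAtStalk M p := by
  let e : M ≃ₗ[R] Π i, A i :=
    (LinearEquiv.ofBijective (DirectSum.coeLinearMap A) hA).symm ≪≫ₗ
      DirectSum.linearEquivFunOnFintype R ι fun i => A i
  rw [Module.rankAtStalk_eq_of_equiv e, Module.rankAtStalk_pi, finsum_eq_sum_of_fintype]

theorem rankAtStalk_eq_one_of_isInternal (hA : DirectSum.IsInternal A)
    (hM : Module.rankAtStalk (R := R) M = Fintype.card ι)
    [∀ i, FaithfulSMul R (A i)] (i : ι) : Module.rankAtStalk (R := R) (A i) = 1 := by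
  ext p
  have hpos (j : ι) : 1 ≤ Module.rankAtStalk (A j) p := rankAtStalk_pos_of_faithfulSMul p
  have hsum : ∑ _j : ι, 1 = ∑ j, Module.rankAtStalk (A j) p := by
    simp [sum_rankAtStalk_of_isInternal hA, hM]
  exact ((Finset.sum_eq_sum_iff_of_le fun j _ => hpos j).mp hsum i (Finset.mem_univ i)).symm

end RankAtStalk

section Eigenspace

variable {R E ι : Type*} [CommRing R] [AddCommGroup E] [Module R E] [Fintype ι]
  {μ : ι → R} {N : Module.End R E}

theorem isInternal_ker_sub_smul_one [DecidableEq ι] (hμ : ∀ i j, i ≠ j → IsUnit (μ i - μ j))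
    (hN : aeval N (∏ k, (X - C (μ k))) = 0) :
    DirectSum.IsInternal fun k => LinearMap.ker (N - μ k • (1 : Module.End R E)) := by
  simpa only [aeval_X_sub_C_eq_sub_smul_one] using
    isInternal_ker_aeval N (fun i j hij => isCoprime_X_sub_C_of_isUnit_sub (hμ i j hij)) hN

theorem faithfulSMul_ker_sub_smul_one (hN : aeval N (∏ k, (X - C (μ k))) = 0)
    (hmin : ∀ P : R[X], P.degree < (Fintype.card ι : WithBot ℕ) → aeval N P = 0 → P = 0) (k : ι) :
    FaithfulSMul R (LinearMap.ker (N - μ k • (1 : Module.End R E))) := by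
  classical
  nontriviality R
  have hcofactor : (X - C (μ k)) * ∏ j ∈ Finset.univ.erase k, (X - C (μ j)) =
      ∏ j, (X - C (μ j)) :=
    Finset.mul_prod_erase _ _ (Finset.mem_univ k)
  have hdeg : (∏ j ∈ Finset.univ.erase k, (X - C (μ j))).degree < (Fintype.card ι : WithBot ℕ) := by
    rw [degree_prod_of_monic _ _ fun j _ => monic_X_sub_C (μ j)]
    simpa using Finset.card_erase_lt_of_mem (Finset.mem_univ k)
  rw [← aeval_X_sub_C_eq_sub_smul_one]
  exact faithfulSMul_ker_aeval N (monic_prod_of_monic _ _ fun j _ => monic_X_sub_C (μ j)) hdeg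
    (hcofactor ▸ hN) hmin

theorem eigenspace_decomposition_local_ring_general [DecidableEq ι] [Module.Projective R E]
    [Module.Finite R E] (hrank : Module.rankAtStalk (R := R) E = Fintype.card ι)
    (hμ : ∀ i j, i ≠ j → IsUnit (μ i - μ j)) (hN : aeval N (∏ k, (X - C (μ k))) = 0) :
    DirectSum.IsInternal (fun k => LinearMap.ker (N - μ k • (1 : Module.End R E))) ∧
    (∀ k, Module.Finite R (LinearMap.ker (N - μ k • (1 : Module.End R E))) ∧
      Module.Projective R (LinearMap.ker (N - μ k • (1 : Module.End R E)))) ∧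
    ((∀ P : R[X], P.degree < (Fintype.card ι : WithBot ℕ) → aeval N P = 0 → P = 0) →
      ∀ k, Module.rankAtStalk (R := R) (LinearMap.ker (N - μ k • (1 : Module.End R E))) = 1) := by
  have hinternal := isInternal_ker_sub_smul_one hμ hN
  have hfinite := finite_of_isInternal hinternal
  have hprojective := projective_of_isInternal hinternal
  refine ⟨hinternal, fun k => ⟨hfinite k, hprojective k⟩, fun hmin => ?_⟩
  have hfaithful := faithfulSMul_ker_sub_smul_one hN hmin
  exact rankAtStalk_eq_one_of_isInternal hinternal hrank

end Eigenspace

/-- Let `R` be a commutative local ring, `E` a finite free `R`-module of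
rank `r ≥ 1`, and `μ₁, …, μ_r ∈ R` with `μᵢ − μⱼ` a unit for `i ≠ j`.  Let `N` be an
endomorphism with `(N − μ₁)∘⋯∘(N − μ_r) = 0`.  Then `E = ⨁ₖ ker(N − μₖ)` is an internal
direct sum; and if moreover no nonzero polynomial of degree `< r` annihilates `N`, then
each `ker(N − μₖ)` is free of rank `1`. -/
theorem eigenspace_decomposition_local_ring
    (R : Type*) [CommRing R] [IsLocalRing R]
    (E : Type*) [AddCommGroup E] [Module R E] [Module.Free R E] [Module.Finite R E]
    (r : ℕ) (hr : 1 ≤ r) (hrank : Module.finrank R E = r)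
    (μ : Fin r → R) (hμ : ∀ i j : Fin r, i ≠ j → IsUnit (μ i - μ j))
    (N : Module.End R E)
    (hN : Polynomial.aeval N (∏ k, (X - C (μ k))) = 0) :
    DirectSum.IsInternal
      (fun k : Fin r => LinearMap.ker (N - μ k • (1 : Module.End R E))) ∧
    ((∀ P : Polynomial R, P.degree < (r : WithBot ℕ) → Polynomial.aeval N P = 0 → P = 0) →
      ∀ k : Fin r,
        Module.Free R ↥(LinearMap.ker (N - μ k • (1 : Module.End R E))) ∧
        Module.finrank R ↥(LinearMap.ker (N - μ k • (1 : Module.End R E))) = 1) := by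
  obtain ⟨hinternal, hker, hrankOne⟩ :=
    eigenspace_decomposition_local_ring_general (by simp [hrank]) hμ hN
  refine ⟨hinternal, fun hmin k => ?_⟩
  obtain ⟨_, _⟩ := hker k
  exact free_and_finrank_eq_of_rankAtStalk_eq (by simpa using hrankOne (by simpa using hmin) k)
end

section
/- Let m ≥ 2 be an integer, θ a real number, and ε, p complex numbers with p^m = ε^m and |p| ≤ 1. Let z : ℝ → ℂ be a function such that for every t ≥ 0: z is differentiable at t with derivative z'(t) = e^{iθ}·(z(t)^m − ε^m), |z(t)| ≤ 1, z(t) ≠ p, and |arg(e^{i(θ−π)/(m−1)}·z(t))| ≤ π/(3m). Assume also |arg(e^{i(θ−π)/(m−1)}·p)| ≤ π/(3m). Then z(t) converges to p as t → +∞. (This is the convergence of the flows of the vector field determined by dz/dt = e^{iθ}(z^m − ε^m) to the singular point p inside the sectorial region.) -/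
open Complex Filter

/-!
Put `c = e^{i(θ-π)/(m-1)}`, so that `e^{iθ} = -c^{m-1}` and the flow reads
`(z - p)' = -(z - p) · ∑ (cz)^i (cp)^{m-1-i}`. Every summand is a product of `m - 1` factors from
a thin sector around the positive real axis, so the sum has real part bounded below by a positive
multiple of `|z - p|^{m-1}`. Hence `|z - p|²` is a Lyapunov function whose decay rate is bounded
away from zero as long as `|z - p|` is, which forces `z → p`.
-/

section LyapunovDecay

open scoped InnerProductSpace

lemma tendsto_atBot_of_hasDerivAt_le_neg {g g' : ℝ → ℝ} {a K : ℝ} (hK : 0 < K)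
    (hg : ∀ t, a ≤ t → HasDerivAt g (g' t) t) (hg' : ∀ t, a ≤ t → g' t ≤ -K) :
    Tendsto g atTop atBot := by
  have linear_bound : ∀ t, a ≤ t → g t ≤ g a + -K * (t - a) := by
    intro t hat
    have increment_le : g t - g a ≤ -K * (t - a) := by
      refine (convex_Ici a).image_sub_le_mul_sub_of_deriv_le
        (fun s hs ↦ (hg s hs).continuousAt.continuousWithinAt)
        (fun s hs ↦ (hg s (interior_subset hs)).differentiableAt.differentiableWithinAt)
        (fun s hs ↦ ?_) a Set.self_mem_Ici t hat hat
      rw [(hg s (interior_subset hs)).deriv]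
      exact hg' s (interior_subset hs)
    linarith
  have tendsto_linear : Tendsto (fun t ↦ g a + -K * (t - a)) atTop atBot :=
    tendsto_atBot_add_const_left _ _ <|
      (tendsto_atTop_add_const_right _ (-a) tendsto_id).const_mul_atTop_of_neg (neg_lt_zero.2 hK)
  exact tendsto_atBot_mono' _ ((eventually_ge_atTop a).mono linear_bound) tendsto_linear

variable {E : Type*} [NormedAddCommGroup E] [InnerProductSpace ℝ E] {u u' : ℝ → E} {a : ℝ}

lemma antitoneOn_norm_of_inner_deriv_nonpos (hu : ∀ t, a ≤ t → HasDerivAt u (u' t) t)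
    (hinner : ∀ t, a ≤ t → ⟪u t, u' t⟫_ℝ ≤ 0) :
    AntitoneOn (fun t ↦ ‖u t‖) (Set.Ici a) := by
  have antitone_sq : AntitoneOn (fun t ↦ ‖u t‖ ^ 2) (Set.Ici a) := by
    refine antitoneOn_of_hasDerivWithinAt_nonpos (f' := fun t ↦ 2 * ⟪u t, u' t⟫_ℝ)
      (convex_Ici a) (fun t ht ↦ (hu t ht).norm_sq.continuousAt.continuousWithinAt)
      (fun t ht ↦ (hu t (interior_subset ht)).norm_sq.hasDerivWithinAt) fun t ht ↦ ?_
    linarith [hinner t (interior_subset ht)]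
  exact fun s hs t ht hst ↦
    (pow_le_pow_iff_left₀ (norm_nonneg _) (norm_nonneg _) two_ne_zero).1 (antitone_sq hs ht hst)

lemma tendsto_zero_of_inner_deriv_le_neg {F : ℝ → ℝ} (hFmono : MonotoneOn F (Set.Ioi 0))
    (hFpos : ∀ r, 0 < r → 0 < F r) (hu : ∀ t, a ≤ t → HasDerivAt u (u' t) t)
    (hinner : ∀ t, a ≤ t → ⟪u t, u' t⟫_ℝ ≤ -F ‖u t‖) :
    Tendsto u atTop (nhds 0) := by
  have inner_nonpos : ∀ t, a ≤ t → ⟪u t, u' t⟫_ℝ ≤ 0 := by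
    intro t ht
    rcases eq_or_ne (u t) 0 with hzero | hne
    · simp [hzero]
    · linarith [hinner t ht, hFpos _ (norm_pos_iff.2 hne)]
  have norm_antitone := antitoneOn_norm_of_inner_deriv_nonpos hu inner_nonpos
  have exists_norm_lt : ∀ δ > 0, ∃ T, a ≤ T ∧ ‖u T‖ < δ := by
    intro δ hδ
    by_contra! hfar
    have sq_tendsto : Tendsto (fun t ↦ ‖u t‖ ^ 2) atTop atBot := by
      refine tendsto_atBot_of_hasDerivAt_le_neg (mul_pos two_pos (hFpos δ hδ))
        (fun t ht ↦ (hu t ht).norm_sq) fun t ht ↦ ?_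
      linarith [hinner t ht, hFmono hδ (hδ.trans_le (hfar t ht)) (hfar t ht)]
    obtain ⟨t, ht⟩ := (sq_tendsto.eventually_lt_atBot 0).exists
    exact ht.not_ge (sq_nonneg _)
  refine Metric.tendsto_atTop.2 fun δ hδ ↦ ?_
  obtain ⟨T, haT, hT⟩ := exists_norm_lt δ hδ
  refine ⟨T, fun t hTt ↦ ?_⟩
  rw [dist_zero_right]
  exact (norm_antitone haT (haT.trans hTt) hTt).trans_lt hT

end LyapunovDecay

section Sector

variable {α : ℝ} {w q : ℂ}

lemma re_pow_mul_pow (w q : ℂ) (a b : ℕ) :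
    (w ^ a * q ^ b).re = ‖w‖ ^ a * ‖q‖ ^ b * Real.cos (a * w.arg + b * q.arg) := by
  have polar : w ^ a * q ^ b =
      ((‖w‖ ^ a * ‖q‖ ^ b : ℝ) : ℂ) * exp ((a * w.arg + b * q.arg : ℝ) * I) := by
    conv_lhs => rw [← norm_mul_exp_arg_mul_I w, ← norm_mul_exp_arg_mul_I q]
    rw [mul_pow, mul_pow, ← exp_nat_mul, ← exp_nat_mul]
    push_cast
    rw [add_mul, exp_add]
    ring_nf
  rw [polar, re_ofReal_mul, exp_ofReal_mul_I_re]

lemma cos_mul_norm_pow_le_re_pow_mul_pow (hw : |w.arg| ≤ α) (hq : |q.arg| ≤ α) {a b : ℕ}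
    (hα : ((a + b : ℕ) : ℝ) * α ≤ Real.pi) :
    Real.cos ((a + b : ℕ) * α) * (‖w‖ ^ a * ‖q‖ ^ b) ≤ (w ^ a * q ^ b).re := by
  have abs_angle_le : |a * w.arg + b * q.arg| ≤ (a + b : ℕ) * α :=
    calc |a * w.arg + b * q.arg| ≤ |a * w.arg| + |b * q.arg| := abs_add_le _ _
      _ = a * |w.arg| + b * |q.arg| := by simp only [abs_mul, Nat.abs_cast]
      _ ≤ a * α + b * α := by gcongr
      _ = (a + b : ℕ) * α := by push_cast; ring
  have cos_le : Real.cos ((a + b : ℕ) * α) ≤ Real.cos (a * w.arg + b * q.arg) := by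
    rw [← Real.cos_abs (a * w.arg + b * q.arg)]
    exact Real.cos_le_cos_of_nonneg_of_le_pi (abs_nonneg _) hα abs_angle_le
  rw [re_pow_mul_pow, mul_comm]
  gcongr

lemma half_add_pow_le_geom_sum₂ {x y : ℝ} (hx : 0 ≤ x) (hy : 0 ≤ y) (n : ℕ) :
    ((x + y) / 2) ^ n ≤ ∑ i ∈ Finset.range (n + 1), x ^ i * y ^ (n - i) := by
  have term_le : ∀ j ∈ Finset.range (n + 1),
      x ^ j * y ^ (n - j) ≤ ∑ i ∈ Finset.range (n + 1), x ^ i * y ^ (n - i) := fun j hj ↦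
    Finset.single_le_sum (f := fun i ↦ x ^ i * y ^ (n - i)) (fun i _ ↦ by positivity) hj
  rcases le_total x y with hxy | hyx
  · calc ((x + y) / 2) ^ n ≤ y ^ n := by gcongr; linarith
      _ = x ^ 0 * y ^ (n - 0) := by simp
      _ ≤ _ := term_le 0 (by simp)
  · calc ((x + y) / 2) ^ n ≤ x ^ n := by gcongr; linarith
      _ = x ^ n * y ^ (n - n) := by simp
      _ ≤ _ := term_le n (by simp)

lemma cos_mul_norm_sub_pow_le_re_geom_sum₂ (hw : |w.arg| ≤ α) (hq : |q.arg| ≤ α) {n : ℕ}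
    (hα : n * α ≤ Real.pi / 2) :
    Real.cos (n * α) * (‖w - q‖ / 2) ^ n ≤
      (∑ i ∈ Finset.range (n + 1), w ^ i * q ^ (n - i)).re := by
  have hnα : 0 ≤ n * α := mul_nonneg n.cast_nonneg ((abs_nonneg _).trans hw)
  have cos_nonneg : 0 ≤ Real.cos (n * α) :=
    Real.cos_nonneg_of_neg_pi_div_two_le_of_le (by linarith [Real.pi_pos]) hα
  have term_le : ∀ i ∈ Finset.range (n + 1),
      Real.cos (n * α) * (‖w‖ ^ i * ‖q‖ ^ (n - i)) ≤ (w ^ i * q ^ (n - i)).re := by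
    intro i hi
    have hsum : i + (n - i) = n := Nat.add_sub_cancel' (Finset.mem_range_succ_iff.1 hi)
    have key := cos_mul_norm_pow_le_re_pow_mul_pow hw hq (a := i) (b := n - i)
    rw [hsum] at key
    exact key (by linarith [Real.pi_pos])
  calc Real.cos (n * α) * (‖w - q‖ / 2) ^ n
      ≤ Real.cos (n * α) * ((‖w‖ + ‖q‖) / 2) ^ n := by gcongr; exact norm_sub_le w q
    _ ≤ Real.cos (n * α) * ∑ i ∈ Finset.range (n + 1), ‖w‖ ^ i * ‖q‖ ^ (n - i) := by
        gcongr
        exact half_add_pow_le_geom_sum₂ (norm_nonneg w) (norm_nonneg q) n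
    _ ≤ (∑ i ∈ Finset.range (n + 1), w ^ i * q ^ (n - i)).re := by
        rw [re_sum, Finset.mul_sum]
        exact Finset.sum_le_sum term_le

end Sector

section SectorialFlow

lemma real_inner_self_mul (u s : ℂ) : inner ℝ u (u * s) = ‖u‖ ^ 2 * s.re := by
  rw [Complex.inner, mul_right_comm, mul_conj, normSq_eq_norm_sq, re_ofReal_mul]

lemma pow_mul_pow_sub_pow_eq_sub_mul_geom_sum₂ {R : Type*} [CommRing R] (c x y : R) (n : ℕ) :
    c ^ n * (x ^ (n + 1) - y ^ (n + 1)) =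
      (x - y) * ∑ i ∈ Finset.range (n + 1), (c * x) ^ i * (c * y) ^ (n - i) := by
  rw [← (Commute.all x y).mul_geom_sum₂, mul_left_comm, Finset.mul_sum]
  congr 1
  refine Finset.sum_congr rfl fun i hi ↦ ?_
  obtain ⟨j, rfl⟩ := Nat.exists_eq_add_of_le (Finset.mem_range_succ_iff.1 hi)
  simp only [Nat.add_sub_cancel, Nat.add_sub_cancel_left]
  ring

lemma inner_sub_neg_pow_mul_le {c x p : ℂ} {α : ℝ} {n : ℕ} (hα : n * α ≤ Real.pi / 2)
    (hx : |(c * x).arg| ≤ α) (hp : |(c * p).arg| ≤ α) :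
    inner ℝ (x - p) (-c ^ n * (x ^ (n + 1) - p ^ (n + 1))) ≤
      -(‖x - p‖ ^ 2 * (Real.cos (n * α) * (‖c‖ * ‖x - p‖ / 2) ^ n)) := by
  rw [neg_mul, inner_neg_right, pow_mul_pow_sub_pow_eq_sub_mul_geom_sum₂, real_inner_self_mul,
    neg_le_neg_iff, ← norm_mul, mul_sub]
  gcongr
  exact cos_mul_norm_sub_pow_le_re_geom_sum₂ hx hp hα

theorem tendsto_of_hasDerivAt_neg_pow_mul_pow_sub_pow {c p : ℂ} {z : ℝ → ℂ} {a α : ℝ} {n : ℕ}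
    (hc : c ≠ 0) (hα : n * α < Real.pi / 2)
    (hderiv : ∀ t, a ≤ t → HasDerivAt z (-c ^ n * (z t ^ (n + 1) - p ^ (n + 1))) t)
    (hz : ∀ t, a ≤ t → |(c * z t).arg| ≤ α) (hp : |(c * p).arg| ≤ α) :
    Tendsto z atTop (nhds p) := by
  have hnα : 0 ≤ n * α := mul_nonneg n.cast_nonneg ((abs_nonneg _).trans hp)
  have cos_pos : 0 < Real.cos (n * α) :=
    Real.cos_pos_of_mem_Ioo ⟨by linarith [Real.pi_pos], hα⟩
  refine tendsto_sub_nhds_zero_iff.1 <| tendsto_zero_of_inner_deriv_le_neg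
    (F := fun r ↦ r ^ 2 * (Real.cos (n * α) * (‖c‖ * r / 2) ^ n)) ?_ ?_
    (fun t ht ↦ (hderiv t ht).sub_const p)
    fun t ht ↦ inner_sub_neg_pow_mul_le hα.le (hz t ht) hp
  · intro r hr s _ hrs
    have hr' : 0 ≤ r := le_of_lt hr
    dsimp only
    gcongr
  · intro r hr
    have : 0 < ‖c‖ := norm_pos_iff.2 hc
    positivity

lemma exp_mul_I_eq_neg_exp_div_mul_I_pow {n : ℕ} (hn : n ≠ 0) (θ : ℂ) :
    exp (θ * I) = -exp ((θ - Real.pi) / n * I) ^ n := by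
  have hexponent : n * ((θ - Real.pi) / n * I) = θ * I - Real.pi * I := by field_simp
  rw [← exp_nat_mul, hexponent, exp_sub, exp_pi_mul_I]
  ring

lemma sub_one_mul_pi_div_three_mul_lt_pi_div_two {m : ℝ} (hm : 0 < m) :
    (m - 1) * (Real.pi / (3 * m)) < Real.pi / 2 :=
  calc (m - 1) * (Real.pi / (3 * m)) < m * (Real.pi / (3 * m)) := by
        gcongr
        exact sub_one_lt m
    _ = Real.pi / 3 := by field_simp
    _ < Real.pi / 2 := by linarith [Real.pi_pos]

end SectorialFlow

theorem flow_tendsto_singular_point_general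
    (m : ℕ) (hm : 2 ≤ m) (θ : ℝ) (ε p : ℂ) (hpε : p ^ m = ε ^ m)
    (z : ℝ → ℂ)
    (hderiv : ∀ t : ℝ, 0 ≤ t → HasDerivAt z (exp (θ * I) * (z t ^ m - ε ^ m)) t)
    (α : ℝ) (hα : (m - 1) * α < Real.pi / 2)
    (hsector : ∀ t : ℝ, 0 ≤ t → |(exp ((θ - Real.pi) / (m - 1) * I) * z t).arg| ≤ α)
    (hpsector : |(exp ((θ - Real.pi) / (m - 1) * I) * p).arg| ≤ α) :
    Tendsto z atTop (nhds p) := by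
  obtain ⟨n, rfl⟩ : ∃ n, m = n + 1 := ⟨m - 1, by omega⟩
  simp only [Nat.cast_add, Nat.cast_one, add_sub_cancel_right] at hα hsector hpsector
  rw [exp_mul_I_eq_neg_exp_div_mul_I_pow (n := n) (by omega), ← hpε] at hderiv
  exact tendsto_of_hasDerivAt_neg_pow_mul_pow_sub_pow (exp_ne_zero _) hα hderiv hsector hpsector

/-- Let `m ≥ 2`, `θ ∈ ℝ`, and `ε, p ∈ ℂ` with `p^m = ε^m` and `|p| ≤ 1`.
Suppose `z : ℝ → ℂ` satisfies, for all `t ≥ 0`: the ODE `z' = e^{iθ}(z^m − ε^m)`,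
`|z(t)| ≤ 1`, `z(t) ≠ p`, and the sector condition
`|arg(e^{i(θ−π)/(m−1)}·z(t))| ≤ π/(3m)`; suppose also
`|arg(e^{i(θ−π)/(m−1)}·p)| ≤ π/(3m)`.  Then `z(t) → p` as `t → +∞`. -/
theorem flow_tendsto_singular_point
    (m : ℕ) (hm : 2 ≤ m) (θ : ℝ) (ε p : ℂ)
    (hpε : p ^ m = ε ^ m) (hp1 : ‖p‖ ≤ 1)
    (z : ℝ → ℂ)
    (hderiv : ∀ t : ℝ, 0 ≤ t →
      HasDerivAt z (Complex.exp ((θ : ℂ) * Complex.I) * (z t ^ m - ε ^ m)) t)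
    (hbound : ∀ t : ℝ, 0 ≤ t → ‖z t‖ ≤ 1)
    (hne : ∀ t : ℝ, 0 ≤ t → z t ≠ p)
    (hsector : ∀ t : ℝ, 0 ≤ t →
      |(Complex.exp ((((θ : ℂ) - (Real.pi : ℂ)) / ((m : ℂ) - 1)) * Complex.I) *
          z t).arg| ≤ Real.pi / (3 * m))
    (hpsector :
      |(Complex.exp ((((θ : ℂ) - (Real.pi : ℂ)) / ((m : ℂ) - 1)) * Complex.I) *
          p).arg| ≤ Real.pi / (3 * m)) :
    Tendsto z atTop (nhds p) :=
  flow_tendsto_singular_point_general m hm θ ε p hpε z hderiv _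
    (sub_one_mul_pi_div_three_mul_lt_pi_div_two (by positivity)) hsector hpsector
end
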